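/- Let m ≥ 2, let α₁,…,α_{m−1}, β₁,…,β_m be real numbers, let 0 < η₁ < η₂ < … < η_m ≤ 1, set μ = 1 − (∑_{i=1}^{m−1} αᵢ(η_{i+1} − ηᵢ) + ∑_{i=1}^{m} βᵢ), and assume μ ≠ 0. Let f : [0,1] × ℝ → ℝ be continuous and suppose there exists L > 0 such that |f(t,u₁) − f(t,u₂)| ≤ L|u₁ − u₂| for all t ∈ [0,1] and u₁, u₂ ∈ ℝ. Let p > 1 and set Φ = (∫₀¹ |G(1,s)|ᵖ ds)^{1/p} + (1/|μ|) ∑_{i=1}^{m−1} |αᵢ| (∫₀¹ |∫_{ηᵢ}^{η_{i+1}} G(τ,s) dτ|ᵖ ds)^{1/p} + (1/|μ|) ∑_{i=1}^{m} |βᵢ| (∫₀¹ |G(ηᵢ,s)|ᵖ ds)^{1/p}. If L·Φ < 1, then there exists exactly one six times continuously differentiable function u : [0,1] → ℝ satisfying u⁽⁶⁾(t) + f(t,u(t)) = 0 for all t ∈ (0,1), u′(0) = u″(0) = u‴(0) = u⁽⁴⁾(0) = 0, u″(1) = 0, and u(0) = ∑_{i=1}^{m−1} αᵢ ∫_{ηᵢ}^{η_{i+1}}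 u(s) ds + ∑_{i=1}^{m} βᵢ u(ηᵢ). -/

import Mathlib

open Set intervalIntegral

/-- Green's function `G(t,s)` for the sixth-order problem. -/
noncomputable def G (t s : ℝ) : ℝ :=
  if s ≤ t then (t ^ 5 * (1 - s) ^ 3 - (t - s) ^ 5) / 120
  else t ^ 5 * (1 - s) ^ 3 / 120


lemma G_eq (t s : ℝ) : G t s = (t ^ 5 * (1 - s) ^ 3 - (max (t - s) 0) ^ 5) / 120 := by
  unfold G
  split_ifs with h
  · rw [max_eq_left (by linarith)]
  · rw [max_eq_right (by linarith)]; ring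

lemma G_cont : Continuous (fun q : ℝ × ℝ => G q.1 q.2) := by
  simp only [G_eq]
  fun_prop

lemma G_cont_left (t : ℝ) : Continuous (fun s => G t s) :=
  G_cont.comp (by fun_prop : Continuous fun s : ℝ => (t, s))

lemma G_bounds {t s : ℝ} (ht : t ∈ Icc (0 : ℝ) 1) (hs : s ∈ Icc (0 : ℝ) 1) :
    |G t s| ≤ |G 1 s| := by
  obtain ⟨ht0, ht1⟩ := ht
  obtain ⟨hs0, hs1⟩ := hs
  have h1s : (0:ℝ) ≤ 1 - s := by linarith
  have e1 : G 1 s = ((1 - s) ^ 3 - (1 - s) ^ 5) / 120 := by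
    unfold G; rw [if_pos hs1]; ring
  have hst : s * t ≤ s := by nlinarith
  -- nonnegativity
  have hG0 : 0 ≤ G t s := by
    unfold G
    split_ifs with h
    · have h0 : 0 ≤ t - s := by linarith
      have a1 : (t - s) ^ 3 ≤ (t * (1 - s)) ^ 3 :=
        pow_le_pow_left₀ h0 (by nlinarith) 3
      have a2 : (t - s) ^ 2 ≤ t ^ 2 := pow_le_pow_left₀ h0 (by linarith) 2
      have a3 : (t - s) ^ 2 * (t - s) ^ 3 ≤ t ^ 2 * (t * (1 - s)) ^ 3 :=
        mul_le_mul a2 a1 (by positivity) (by positivity)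
      have : (t - s) ^ 5 ≤ t ^ 5 * (1 - s) ^ 3 := by nlinarith
      linarith
    · positivity
  have hle : G t s ≤ G 1 s := by
    have key : ∀ x ∈ Icc s 1, (x ^ 5 * (1 - s) ^ 3 - (x - s) ^ 5) ≤ ((1 - s) ^ 3 - (1 - s) ^ 5) := by
      have hmono : MonotoneOn (fun x : ℝ => x ^ 5 * (1 - s) ^ 3 - (x - s) ^ 5) (Icc s 1) := by
        apply monotoneOn_of_deriv_nonneg (convex_Icc s 1)
        · fun_prop
        · fun_prop
        · intro x hx
          rw [interior_Icc] at hx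
          have hd : HasDerivAt (fun x : ℝ => x ^ 5 * (1 - s) ^ 3 - (x - s) ^ 5)
              (((5:ℕ):ℝ) * x ^ 4 * (1 - s) ^ 3 - ((5:ℕ):ℝ) * (x - s) ^ 4 * 1) x := by
            exact ((hasDerivAt_pow 5 x).mul_const _).sub (((hasDerivAt_id x).sub_const s).pow 5)
          rw [hd.deriv]
          have h0 : 0 ≤ x - s := by linarith [hx.1]
          have hx0 : 0 ≤ x := by linarith [hx.1]
          have a1 : (x - s) ^ 3 ≤ (x * (1 - s)) ^ 3 :=
            pow_le_pow_left₀ h0 (by nlinarith [hx.2]) 3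
          have a3 : (x - s) * (x - s) ^ 3 ≤ x * (x * (1 - s)) ^ 3 :=
            mul_le_mul (by linarith) a1 (by positivity) (by positivity)
          push_cast
          nlinarith
      intro x hx
      have := hmono hx (right_mem_Icc.2 hs1) hx.2
      simpa using this
    rw [e1]
    unfold G
    split_ifs with h
    · have := key t ⟨h, ht1⟩
      linarith
    · have h2 := key s ⟨le_rfl, hs1⟩
      have h3 : t ^ 5 ≤ s ^ 5 := pow_le_pow_left₀ ht0 (by linarith) 5
      have h4 : t ^ 5 * (1 - s) ^ 3 ≤ s ^ 5 * (1 - s) ^ 3 :=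
        mul_le_mul_of_nonneg_right h3 (by positivity)
      simp at h2
      linarith
  rw [abs_of_nonneg hG0, abs_of_nonneg (hG0.trans hle)]
  exact hle

/-- Jensen on `[0,1]`. -/
lemma int_abs_le (g : ℝ → ℝ) (hg : Continuous g) (p : ℝ) (hp : 1 < p) :
    ∫ s in (0:ℝ)..1, |g s| ≤ (∫ s in (0:ℝ)..1, |g s| ^ p) ^ (1 / p) := by
  have hp0 : 0 < p := by linarith
  have hc : Continuous (fun s => |g s| ^ p) :=
    hg.abs.rpow_const (fun _ => Or.inr hp0.le)
  have i1 : MeasureTheory.Integrable (fun s => |g s|)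
      (MeasureTheory.volume.restrict (Ioc (0:ℝ) 1)) := by
    have := (hg.abs.intervalIntegrable (μ := MeasureTheory.volume) 0 1)
    rwa [intervalIntegrable_iff_integrableOn_Ioc_of_le zero_le_one] at this
  have i2 : MeasureTheory.Integrable (fun s => |g s| ^ p)
      (MeasureTheory.volume.restrict (Ioc (0:ℝ) 1)) := by
    have := (hc.intervalIntegrable (μ := MeasureTheory.volume) 0 1)
    rwa [intervalIntegrable_iff_integrableOn_Ioc_of_le zero_le_one] at this
  have : MeasureTheory.IsProbabilityMeasure (MeasureTheory.volume.restrict (Ioc (0:ℝ) 1)) :=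
    ⟨by simp⟩
  have J := (convexOn_rpow hp.le).map_integral_le
    (μ := MeasureTheory.volume.restrict (Ioc (0:ℝ) 1)) (f := fun s => |g s|)
    (continuousOn_id.rpow_const (fun _ _ => Or.inr hp0.le)) isClosed_Ici
    (Filter.Eventually.of_forall fun s => mem_Ici.2 (abs_nonneg _)) i1 i2
  rw [integral_of_le zero_le_one, integral_of_le zero_le_one]
  have h0 : 0 ≤ ∫ s in Ioc (0:ℝ) 1, |g s| := MeasureTheory.integral_nonneg fun s => abs_nonneg _
  calc _ = ((∫ s in Ioc (0:ℝ) 1, |g s|) ^ p) ^ (1 / p) := by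
        rw [← Real.rpow_mul h0, mul_one_div_cancel hp0.ne', Real.rpow_one]
    _ ≤ _ := Real.rpow_le_rpow (by positivity) J (by positivity)

lemma int_mul_le (g h : ℝ → ℝ) (hg : Continuous g) (hh : Continuous h) (M : ℝ)
    (hM : ∀ s, |h s| ≤ M) :
    |∫ s in (0:ℝ)..1, g s * h s| ≤ M * ∫ s in (0:ℝ)..1, |g s| := by
  calc _ ≤ ∫ s in (0:ℝ)..1, |g s * h s| := abs_integral_le_integral_abs zero_le_one
    _ ≤ ∫ s in (0:ℝ)..1, M * |g s| := by
      apply integral_mono_on zero_le_one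
      · exact (hg.mul hh).abs.intervalIntegrable _ _
      · exact (hg.abs.const_mul M).intervalIntegrable _ _
      · intro s _
        rw [abs_mul, mul_comm]
        exact mul_le_mul_of_nonneg_right (hM s) (abs_nonneg _)
    _ = _ := by rw [integral_const_mul]

/-- The Green operator. -/
noncomputable def W (h : ℝ → ℝ) (t : ℝ) : ℝ := ∫ s in (0:ℝ)..1, G t s * h s

lemma W_cont (h : ℝ → ℝ) (hh : Continuous h) : Continuous (W h) := by
  unfold W
  apply intervalIntegral.continuous_parametric_intervalIntegral_of_continuous' (μ := MeasureTheory.volume)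
  exact G_cont.mul (hh.comp continuous_snd)

lemma W_sub (h k : ℝ → ℝ) (hh : Continuous h) (hk : Continuous k) (t : ℝ) :
    W (fun s => h s - k s) t = W h t - W k t := by
  unfold W
  rw [← integral_sub]
  · congr 1; ext s; ring
  · exact ((G_cont_left t).mul hh).intervalIntegrable _ _
  · exact ((G_cont_left t).mul hk).intervalIntegrable _ _

lemma W_bound' (h : ℝ → ℝ) (hh : Continuous h) (M : ℝ) (hM : ∀ s, |h s| ≤ M) (p : ℝ) (hp : 1 < p)
    (t : ℝ) : |W h t| ≤ M * (∫ s in (0:ℝ)..1, |G t s| ^ p) ^ (1 / p) := by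
  have hM0 : 0 ≤ M := (abs_nonneg _).trans (hM 0)
  exact (int_mul_le _ h (G_cont_left t) hh M hM).trans
    (mul_le_mul_of_nonneg_left (int_abs_le _ (G_cont_left t) p hp) hM0)

lemma W_bound (h : ℝ → ℝ) (hh : Continuous h) (M : ℝ) (hM : ∀ s, |h s| ≤ M) (p : ℝ) (hp : 1 < p)
    (t : ℝ) (ht : t ∈ Icc (0:ℝ) 1) : |W h t| ≤ M * (∫ s in (0:ℝ)..1, |G 1 s| ^ p) ^ (1 / p) := by
  have hM0 : 0 ≤ M := (abs_nonneg _).trans (hM 0)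
  refine (int_mul_le _ h (G_cont_left t) hh M hM).trans
    (mul_le_mul_of_nonneg_left (le_trans ?_ (int_abs_le _ (G_cont_left 1) p hp)) hM0)
  apply integral_mono_on zero_le_one
  · exact (G_cont_left t).abs.intervalIntegrable _ _
  · exact (G_cont_left 1).abs.intervalIntegrable _ _
  · intro s hs
    exact G_bounds ht hs

lemma int_W_bound (h : ℝ → ℝ) (hh : Continuous h) (M : ℝ) (hM : ∀ s, |h s| ≤ M) (p : ℝ) (hp : 1 < p)
    (a b : ℝ) :
    |∫ t in a..b, W h t| ≤ M * (∫ s in (0:ℝ)..1, |∫ τ in a..b, G τ s| ^ p) ^ (1 / p) := by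
  have hM0 : 0 ≤ M := (abs_nonneg _).trans (hM 0)
  have hg : Continuous (fun s => ∫ τ in a..b, G τ s) := by
    apply intervalIntegral.continuous_parametric_intervalIntegral_of_continuous' (μ := MeasureTheory.volume)
    exact G_cont.comp continuous_swap
  have e : ∫ t in a..b, W h t = ∫ s in (0:ℝ)..1, (∫ τ in a..b, G τ s) * h s := by
    unfold W
    rw [MeasureTheory.intervalIntegral_intervalIntegral_swap]
    · congr 1; ext s; rw [integral_mul_const]
    · have hc : Continuous (fun q : ℝ × ℝ => G q.1 q.2 * h q.2) :=
        G_cont.mul (hh.comp continuous_snd)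
      have hI : MeasureTheory.IntegrableOn (fun q : ℝ × ℝ => G q.1 q.2 * h q.2)
          (uIcc a b ×ˢ uIcc 0 1) :=
        hc.continuousOn.integrableOn_compact (isCompact_uIcc.prod isCompact_uIcc)
      exact hI.mono_set (prod_mono uIoc_subset_uIcc uIoc_subset_uIcc)
  rw [e]
  exact (int_mul_le _ h hg hh M hM).trans
    (mul_le_mul_of_nonneg_left (int_abs_le _ hg p hp) hM0)

/-- The primitive from `0`. -/
noncomputable def J (h : ℝ → ℝ) (t : ℝ) : ℝ := ∫ s in (0:ℝ)..t, h s

lemma J_zero (h : ℝ → ℝ) : J h 0 = 0 := by simp [J]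

lemma J_deriv (h : ℝ → ℝ) (hh : Continuous h) (t : ℝ) : HasDerivAt (J h) (h t) t :=
  integral_hasDerivAt_right (hh.intervalIntegrable _ _)
    (hh.stronglyMeasurableAtFilter _ _) hh.continuousAt

lemma J_cont (h : ℝ → ℝ) (hh : Continuous h) : Continuous (J h) :=
  continuous_iff_continuousAt.2 fun t => (J_deriv h hh t).continuousAt

lemma J_iter_cont (n : ℕ) (h : ℝ → ℝ) (hh : Continuous h) : Continuous (J^[n] h) := by
  induction n with
  | zero => exact hh
  | succ n ih => rw [Function.iterate_succ_apply']; exact J_cont _ ih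

lemma J_cauchy (n : ℕ) (h : ℝ → ℝ) (hh : Continuous h) (t : ℝ) :
    J^[n+1] h t = ∫ s in (0:ℝ)..t, (t - s) ^ n / n.factorial * h s := by
  induction n generalizing h with
  | zero => simp [J]
  | succ n ih =>
    rw [Function.iterate_succ_apply, ih _ (J_cont h hh)]
    have hf : (n.factorial : ℝ) ≠ 0 := by positivity
    have hd : ∀ s ∈ uIcc 0 t, HasDerivAt (fun s : ℝ => (t - s) ^ (n + 1) / (n + 1).factorial)
        (-((t - s) ^ n / n.factorial)) s := by
      intro s _
      have := (((hasDerivAt_id s).const_sub t).pow (n + 1)).div_const ((n + 1).factorial : ℝ)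
      refine HasDerivAt.congr_deriv this ?_
      rw [Nat.factorial_succ]; push_cast
      simp
      field_simp
    have := integral_mul_deriv_eq_deriv_mul hd (fun s _ => J_deriv h hh s)
      ((by fun_prop : Continuous fun s : ℝ => (-((t - s) ^ n / n.factorial))).intervalIntegrable 0 t)
      (hh.intervalIntegrable 0 t)
    rw [this]
    simp [J_zero]

lemma W_eq (h : ℝ → ℝ) (hh : Continuous h) (t : ℝ) (ht : t ∈ Icc (0:ℝ) 1) :
    W h t = t ^ 5 / 20 * J^[4] h 1 - J^[6] h t := by
  rw [J_cauchy 3 h hh, J_cauchy 5 h hh]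
  have e : W h t = (∫ s in (0:ℝ)..1, t ^ 5 * (1 - s) ^ 3 / 120 * h s)
      - ∫ s in (0:ℝ)..1, (max (t - s) 0) ^ 5 / 120 * h s := by
    unfold W
    rw [← integral_sub]
    · congr 1; ext s; rw [G_eq]; ring
    · exact Continuous.intervalIntegrable (by fun_prop) _ _
    · exact Continuous.intervalIntegrable (by fun_prop) _ _
  rw [e]
  congr 1
  · rw [← integral_const_mul]
    congr 1; ext s
    norm_num [Nat.factorial]; ring
  · rw [← integral_add_adjacent_intervals (b := t)
      (Continuous.intervalIntegrable (by fun_prop) _ _)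
      (Continuous.intervalIntegrable (by fun_prop) _ _)]
    have z : ∫ s in t..1, (max (t - s) 0) ^ 5 / 120 * h s = 0 := by
      rw [integral_congr (g := fun _ => 0)]
      · simp
      · intro s hs
        rw [uIcc_of_le ht.2] at hs
        have : max (t - s) 0 = 0 := max_eq_right (by linarith [hs.1])
        simp [this]
    rw [z, add_zero]
    apply integral_congr
    intro s hs
    rw [uIcc_of_le ht.1] at hs
    have : max (t - s) 0 = t - s := max_eq_left (by linarith [hs.2])
    simp only [this]
    norm_num [Nat.factorial]

/-- A chain of derivatives gives smoothness. -/
lemma chain_iter (F : ℕ → ℝ → ℝ) (hF : ∀ k, k < 6 → ∀ t, HasDerivAt (F k) (F (k+1) t) t) :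
    ∀ k, k ≤ 6 → iteratedDeriv k (F 0) = F k := by
  intro k
  induction k with
  | zero => intro _; simp
  | succ k ih =>
    intro hk
    rw [iteratedDeriv_succ, ih (by omega)]
    ext t
    exact (hF k (by omega) t).deriv

lemma chain_contDiff (F : ℕ → ℝ → ℝ) (hF : ∀ k, k < 6 → ∀ t, HasDerivAt (F k) (F (k+1) t) t)
    (h6 : Continuous (F 6)) : ContDiff ℝ 6 (F 0) := by
  have hi := chain_iter F hF
  rw [show (6 : WithTop ℕ∞) = ((6 : ℕ) : WithTop ℕ∞) by rfl, contDiff_nat_iff_iteratedDeriv]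
  constructor
  · intro k hk
    rw [hi k hk]
    rcases hk.lt_or_eq with h | h
    · exact continuous_iff_continuousAt.2 fun t => (hF k h t).continuousAt
    · rw [h]; exact h6
  · intro k hk
    rw [hi k hk.le]
    exact fun t => (hF k hk t).differentiableAt

/-- `c + A t^5/120 - J^6 h` and its derivatives. -/
noncomputable def FF (c A : ℝ) (h : ℝ → ℝ) : ℕ → ℝ → ℝ
  | 0 => fun t => c + A * t ^ 5 / 120 - J^[6] h t
  | 1 => fun t => A * t ^ 4 / 24 - J^[5] h t
  | 2 => fun t => A * t ^ 3 / 6 - J^[4] h t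
  | 3 => fun t => A * t ^ 2 / 2 - J^[3] h t
  | 4 => fun t => A * t - J^[2] h t
  | 5 => fun t => A - J^[1] h t
  | _ => fun t => - h t

lemma FF_deriv (c A : ℝ) (h : ℝ → ℝ) (hh : Continuous h) :
    ∀ k, k < 6 → ∀ t, HasDerivAt (FF c A h k) (FF c A h (k+1) t) t := by
  intro k hk t
  have hJ : ∀ n, HasDerivAt (J^[n+1] h) (J^[n] h t) t := by
    intro n
    rw [Function.iterate_succ_apply']
    exact J_deriv _ (J_iter_cont n h hh) t
  interval_cases k
  · refine HasDerivAt.congr_deriv (f := FF c A h _) (((((hasDerivAt_pow 5 t).const_mul A).div_const 120).const_add c).sub (hJ 5)) ?_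
    simp only [FF]; norm_num; ring
  · refine HasDerivAt.congr_deriv (f := FF c A h _) ((((hasDerivAt_pow 4 t).const_mul A).div_const 24).sub (hJ 4)) ?_
    simp only [FF]; norm_num; ring
  · refine HasDerivAt.congr_deriv (f := FF c A h _) ((((hasDerivAt_pow 3 t).const_mul A).div_const 6).sub (hJ 3)) ?_
    simp only [FF]; norm_num; ring
  · refine HasDerivAt.congr_deriv (f := FF c A h _) ((((hasDerivAt_pow 2 t).const_mul A).div_const 2).sub (hJ 2)) ?_
    simp only [FF]; norm_num; ring
  · refine HasDerivAt.congr_deriv (f := FF c A h _) (((hasDerivAt_id t).const_mul A).sub (hJ 1)) ?_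
    simp only [FF]; norm_num
  · exact (hJ 0).const_sub A

lemma FF_six_cont (c A : ℝ) (h : ℝ → ℝ) (hh : Continuous h) : Continuous (FF c A h 6) := hh.neg

lemma J_iter_zero (n : ℕ) (h : ℝ → ℝ) : J^[n+1] h 0 = 0 := by
  rw [Function.iterate_succ_apply']; exact J_zero _

lemma FF_within (c A : ℝ) (h : ℝ → ℝ) (hh : Continuous h) (k : ℕ) (hk : k ≤ 6) (t : ℝ)
    (ht : t ∈ Icc (0:ℝ) 1) :
    iteratedDerivWithin k (FF c A h 0) (Icc 0 1) t = FF c A h k t := by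
  rw [iteratedDerivWithin_eq_iteratedDeriv (uniqueDiffOn_Icc zero_lt_one) _ ht,
    chain_iter _ (FF_deriv c A h hh) k hk]
  exact ((chain_contDiff _ (FF_deriv c A h hh) (FF_six_cont c A h hh)).contDiffAt).of_le
    (by exact_mod_cast hk)

lemma eq_of_deriv (a b a' b' : ℝ → ℝ)
    (ha : ∀ t ∈ Icc (0:ℝ) 1, HasDerivWithinAt a (a' t) (Icc 0 1) t)
    (hb : ∀ t ∈ Icc (0:ℝ) 1, HasDerivWithinAt b (b' t) (Icc 0 1) t)
    (h : EqOn a' b' (Icc 0 1)) (h0 : a 0 = b 0) : EqOn a b (Icc 0 1) := by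
  have hd : ∀ t ∈ Icc (0:ℝ) 1, HasDerivWithinAt (fun x => a x - b x) 0 (Icc 0 1) t := by
    intro t ht
    have := (ha t ht).sub (hb t ht)
    rw [h ht, sub_self] at this
    exact this
  have := constant_of_derivWithin_zero (f := fun x => a x - b x) (a := 0) (b := 1)
    (fun t ht => (hd t ht).differentiableWithinAt)
    (fun t ht => (hd t (Ico_subset_Icc_self ht)).derivWithin
      (uniqueDiffOn_Icc zero_lt_one t (Ico_subset_Icc_self ht)))
  intro t ht
  have := this t ht
  linarith

/-- Representation of solutions. -/
lemma sol_repr (v h : ℝ → ℝ) (hh : Continuous h) (hv : ContDiffOn ℝ 6 v (Icc 0 1))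
    (h6 : ∀ t ∈ Ioo (0 : ℝ) 1, iteratedDerivWithin 6 v (Icc 0 1) t + h t = 0)
    (h1 : iteratedDerivWithin 1 v (Icc 0 1) 0 = 0)
    (h2 : iteratedDerivWithin 2 v (Icc 0 1) 0 = 0)
    (h3 : iteratedDerivWithin 3 v (Icc 0 1) 0 = 0)
    (h4 : iteratedDerivWithin 4 v (Icc 0 1) 0 = 0)
    (h21 : iteratedDerivWithin 2 v (Icc 0 1) 1 = 0) :
    ∀ t ∈ Icc (0:ℝ) 1, v t = v 0 + W h t := by
  have huniq := uniqueDiffOn_Icc (zero_lt_one (α := ℝ))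
  set A := iteratedDerivWithin 5 v (Icc 0 1) 0 with hA
  have hder : ∀ k, k < 6 → ∀ t ∈ Icc (0:ℝ) 1,
      HasDerivWithinAt (iteratedDerivWithin k v (Icc 0 1))
        (iteratedDerivWithin (k+1) v (Icc 0 1) t) (Icc 0 1) t := by
    intro k hk t ht
    rw [iteratedDerivWithin_succ]
    exact ((hv.differentiableOn_iteratedDerivWithin (by exact_mod_cast hk) huniq) t ht).hasDerivWithinAt
  have hFd : ∀ k, k < 6 → ∀ t ∈ Icc (0:ℝ) 1,
      HasDerivWithinAt (FF (v 0) A h k) (FF (v 0) A h (k+1) t) (Icc 0 1) t :=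
    fun k hk t _ => (FF_deriv (v 0) A h hh k hk t).hasDerivWithinAt
  have step : ∀ k, k < 6 → EqOn (iteratedDerivWithin (k+1) v (Icc 0 1)) (FF (v 0) A h (k+1)) (Icc 0 1) →
      iteratedDerivWithin k v (Icc 0 1) 0 = FF (v 0) A h k 0 →
      EqOn (iteratedDerivWithin k v (Icc 0 1)) (FF (v 0) A h k) (Icc 0 1) :=
    fun k hk he h0 => eq_of_deriv _ _ _ _ (hder k hk) (hFd k hk) he h0
  have e6 : EqOn (iteratedDerivWithin 6 v (Icc 0 1)) (FF (v 0) A h 6) (Icc 0 1) := by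
    have hc : ContinuousOn (iteratedDerivWithin 6 v (Icc 0 1)) (Icc 0 1) :=
      hv.continuousOn_iteratedDerivWithin (by norm_num) huniq
    have ho : EqOn (iteratedDerivWithin 6 v (Icc 0 1)) (FF (v 0) A h 6) (Ioo 0 1) := by
      intro t ht
      have := h6 t ht
      simp only [FF]
      linarith
    refine ho.of_subset_closure hc (FF_six_cont _ _ h hh).continuousOn Ioo_subset_Icc_self ?_
    rw [closure_Ioo (zero_ne_one)]
  have e5 := step 5 (by norm_num) e6 (by simp [FF, hA, J_zero])
  have e4 := step 4 (by norm_num) e5 (by rw [h4]; simp only [FF, J_iter_zero]; norm_num)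
  have e3 := step 3 (by norm_num) e4 (by rw [h3]; simp only [FF, J_iter_zero]; norm_num)
  have e2 := step 2 (by norm_num) e3 (by rw [h2]; simp only [FF, J_iter_zero]; norm_num)
  have e1 := step 1 (by norm_num) e2 (by rw [h1]; simp only [FF, J_iter_zero]; norm_num)
  have e0 := step 0 (by norm_num) e1
    (by rw [iteratedDerivWithin_zero]; simp only [FF, J_iter_zero]; norm_num)
  intro t ht
  have k0 := e0 ht
  have k1 := e2 (right_mem_Icc.2 zero_le_one)
  rw [h21] at k1
  rw [iteratedDerivWithin_zero] at k0
  rw [W_eq h hh t ht, k0]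
  simp only [FF] at k1 ⊢
  have : J^[4] h 1 = A / 6 := by linarith
  rw [this]; ring

/-- Conversely. -/
lemma sol_repr_conv (h : ℝ → ℝ) (hh : Continuous h) (c : ℝ) :
    ∃ u : ℝ → ℝ, (∀ t ∈ Icc (0:ℝ) 1, u t = c + W h t) ∧ ContDiffOn ℝ 6 u (Icc 0 1) ∧
    (∀ t ∈ Ioo (0 : ℝ) 1, iteratedDerivWithin 6 u (Icc 0 1) t + h t = 0) ∧
    iteratedDerivWithin 1 u (Icc 0 1) 0 = 0 ∧
    iteratedDerivWithin 2 u (Icc 0 1) 0 = 0 ∧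
    iteratedDerivWithin 3 u (Icc 0 1) 0 = 0 ∧
    iteratedDerivWithin 4 u (Icc 0 1) 0 = 0 ∧
    iteratedDerivWithin 2 u (Icc 0 1) 1 = 0 := by
  have m0 : (0:ℝ) ∈ Icc (0:ℝ) 1 := left_mem_Icc.2 zero_le_one
  have m1 : (1:ℝ) ∈ Icc (0:ℝ) 1 := right_mem_Icc.2 zero_le_one
  refine ⟨FF c (6 * J^[4] h 1) h 0, ?_, ?_, ?_, ?_, ?_, ?_, ?_, ?_⟩
  · intro t ht
    rw [W_eq h hh t ht]
    simp only [FF]; ring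
  · exact (chain_contDiff _ (FF_deriv _ _ h hh) (FF_six_cont _ _ h hh)).contDiffOn
  · intro t ht
    rw [FF_within _ _ h hh 6 le_rfl t (Ioo_subset_Icc_self ht)]
    simp [FF]
  · rw [FF_within _ _ h hh 1 (by norm_num) 0 m0]
    simp only [FF, J_iter_zero]; norm_num
  · rw [FF_within _ _ h hh 2 (by norm_num) 0 m0]
    simp only [FF, J_iter_zero]; norm_num
  · rw [FF_within _ _ h hh 3 (by norm_num) 0 m0]
    simp only [FF, J_iter_zero]; norm_num
  · rw [FF_within _ _ h hh 4 (by norm_num) 0 m0]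
    simp only [FF, J_iter_zero]; norm_num
  · rw [FF_within _ _ h hh 2 (by norm_num) 1 m1]
    simp only [FF]; ring

lemma W_at_zero (h : ℝ → ℝ) (hh : Continuous h) : W h 0 = 0 := by
  rw [W_eq h hh 0 (left_mem_Icc.2 zero_le_one), J_iter_zero]; norm_num

/-- **Existence and uniqueness** (via Rus's fixed point theorem): if `f` is Lipschitz in its
second variable with constant `L` and `L · Φ < 1`, then the sixth-order boundary value
problem `u⁽⁶⁾ + f(t,u) = 0` with the multi-point and multi-term integral boundary
conditions has exactly one solution (unique as a function on `[0,1]`). -/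
theorem unique_solution
    (m : ℕ) (hm : 2 ≤ m) (α β η : ℕ → ℝ)
    (hη0 : 0 < η 1) (hηm : η m ≤ 1)
    (hηmono : ∀ i, 1 ≤ i → i < m → η i < η (i + 1))
    (μ : ℝ)
    (hμdef : μ = 1 - ((∑ i ∈ Finset.Icc 1 (m - 1), α i * (η (i + 1) - η i)) +
      ∑ i ∈ Finset.Icc 1 m, β i))
    (hμ : μ ≠ 0)
    (f : ℝ → ℝ → ℝ)
    (hf : ContinuousOn (fun q : ℝ × ℝ => f q.1 q.2) ((Icc (0 : ℝ) 1) ×ˢ (univ : Set ℝ)))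
    (L : ℝ) (hL : 0 < L)
    (hLip : ∀ t ∈ Icc (0 : ℝ) 1, ∀ u₁ u₂ : ℝ, |f t u₁ - f t u₂| ≤ L * |u₁ - u₂|)
    (p : ℝ) (hp : 1 < p)
    (Φ : ℝ)
    (hΦ : Φ = (∫ s in (0 : ℝ)..1, |G 1 s| ^ p) ^ (1 / p)
        + (1 / |μ|) * ∑ i ∈ Finset.Icc 1 (m - 1),
            |α i| * (∫ s in (0 : ℝ)..1, |∫ τ in (η i)..(η (i + 1)), G τ s| ^ p) ^ (1 / p)
        + (1 / |μ|) * ∑ i ∈ Finset.Icc 1 m,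
            |β i| * (∫ s in (0 : ℝ)..1, |G (η i) s| ^ p) ^ (1 / p))
    (hLΦ : L * Φ < 1) :
    ∃ u : ℝ → ℝ,
      (ContDiffOn ℝ 6 u (Icc 0 1) ∧
        (∀ t ∈ Ioo (0 : ℝ) 1, iteratedDerivWithin 6 u (Icc 0 1) t + f t (u t) = 0) ∧
        iteratedDerivWithin 1 u (Icc 0 1) 0 = 0 ∧
        iteratedDerivWithin 2 u (Icc 0 1) 0 = 0 ∧
        iteratedDerivWithin 3 u (Icc 0 1) 0 = 0 ∧
        iteratedDerivWithin 4 u (Icc 0 1) 0 = 0 ∧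
        iteratedDerivWithin 2 u (Icc 0 1) 1 = 0 ∧
        u 0 = (∑ i ∈ Finset.Icc 1 (m - 1), α i * ∫ s in (η i)..(η (i + 1)), u s) +
          ∑ i ∈ Finset.Icc 1 m, β i * u (η i)) ∧
      ∀ v : ℝ → ℝ,
        (ContDiffOn ℝ 6 v (Icc 0 1) ∧
          (∀ t ∈ Ioo (0 : ℝ) 1, iteratedDerivWithin 6 v (Icc 0 1) t + f t (v t) = 0) ∧
          iteratedDerivWithin 1 v (Icc 0 1) 0 = 0 ∧
          iteratedDerivWithin 2 v (Icc 0 1) 0 = 0 ∧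
          iteratedDerivWithin 3 v (Icc 0 1) 0 = 0 ∧
          iteratedDerivWithin 4 v (Icc 0 1) 0 = 0 ∧
          iteratedDerivWithin 2 v (Icc 0 1) 1 = 0 ∧
          v 0 = (∑ i ∈ Finset.Icc 1 (m - 1), α i * ∫ s in (η i)..(η (i + 1)), v s) +
            ∑ i ∈ Finset.Icc 1 m, β i * v (η i)) →
        EqOn v u (Icc (0 : ℝ) 1) := by
  have m0 : (0:ℝ) ∈ Icc (0:ℝ) 1 := left_mem_Icc.2 zero_le_one
  have hlow : ∀ i, 1 ≤ i → i ≤ m → 0 < η i := by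
    intro i h1
    induction i, h1 using Nat.le_induction with
    | base => intro _; exact hη0
    | succ k hk ih => intro h; exact (ih (by omega)).trans (hηmono k hk (by omega))
  have hhigh : ∀ d i, 1 ≤ i → i + d = m → η i ≤ 1 := by
    intro d
    induction d with
    | zero => intro i _ h; rw [show i = m by omega]; exact hηm
    | succ d ih =>
      intro i h1 h
      exact (hηmono i h1 (by omega)).le.trans (ih (i+1) (by omega) (by omega))
  have hηmem : ∀ i, 1 ≤ i → i ≤ m → η i ∈ Icc (0:ℝ) 1 := fun i h1 h2 =>
    ⟨(hlow i h1 h2).le, hhigh (m - i) i h1 (by omega)⟩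
  -- the boundary functional
  set B : (ℝ → ℝ) → ℝ := fun w =>
    (∑ i ∈ Finset.Icc 1 (m - 1), α i * ∫ s in (η i)..(η (i + 1)), w s) +
          ∑ i ∈ Finset.Icc 1 m, β i * w (η i) with hB
  have B_congr : ∀ w z : ℝ → ℝ, EqOn w z (Icc 0 1) → B w = B z := by
    intro w z hwz
    simp only [hB]
    congr 1
    · apply Finset.sum_congr rfl
      intro i hi
      rw [Finset.mem_Icc] at hi
      congr 1
      apply integral_congr
      intro s hs
      exact hwz ((uIcc_subset_Icc (hηmem i hi.1 (by omega)) (hηmem (i+1) (by omega) (by omega))) hs)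
    · apply Finset.sum_congr rfl
      intro i hi
      rw [Finset.mem_Icc] at hi
      rw [hwz (hηmem i hi.1 hi.2)]
  have B_const : ∀ (c : ℝ) (w : ℝ → ℝ), Continuous w → B (fun t => c + w t) = c * (1 - μ) + B w := by
    intro c w hw
    simp only [hB]
    have e1 : ∀ i, α i * ∫ s in (η i)..(η (i + 1)), (c + w s) =
        c * (α i * (η (i+1) - η i)) + α i * ∫ s in (η i)..(η (i + 1)), w s := by
      intro i
      rw [integral_add (by simp) (hw.intervalIntegrable _ _)]
      simp; ring
    have e2 : ∀ i, β i * (c + w (η i)) = c * β i + β i * w (η i) := fun i => by ring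
    simp only [e1, e2, Finset.sum_add_distrib, ← Finset.mul_sum]
    rw [hμdef]; ring
  have B_sub : ∀ (w z : ℝ → ℝ), Continuous w → Continuous z →
      B (fun t => w t - z t) = B w - B z := by
    intro w z hw hz
    simp only [hB]
    have e1 : ∀ i, α i * ∫ s in (η i)..(η (i + 1)), (w s - z s) =
        α i * (∫ s in (η i)..(η (i + 1)), w s) - α i * ∫ s in (η i)..(η (i + 1)), z s := by
      intro i
      rw [integral_sub (hw.intervalIntegrable _ _) (hz.intervalIntegrable _ _)]
      ring
    simp only [e1, mul_sub, Finset.sum_sub_distrib]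
    ring
  have key : ∀ (h : ℝ → ℝ) (M : ℝ), Continuous h → (∀ s, |h s| ≤ M) → ∀ t ∈ Icc (0:ℝ) 1,
      |B (W h) / μ + W h t| ≤ M * Φ := by
    intro h M hh hM t ht
    have b1 := W_bound h hh M hM p hp t ht
    have b2 : |B (W h)| ≤ M * (∑ i ∈ Finset.Icc 1 (m - 1),
            |α i| * (∫ s in (0 : ℝ)..1, |∫ τ in (η i)..(η (i + 1)), G τ s| ^ p) ^ (1 / p))
        + M * ∑ i ∈ Finset.Icc 1 m,
            |β i| * (∫ s in (0 : ℝ)..1, |G (η i) s| ^ p) ^ (1 / p) := by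
      simp only [hB]
      refine (abs_add_le _ _).trans (add_le_add ?_ ?_)
      · refine (Finset.abs_sum_le_sum_abs _ _).trans ?_
        rw [Finset.mul_sum]
        apply Finset.sum_le_sum
        intro i _
        rw [abs_mul, mul_left_comm]
        exact mul_le_mul_of_nonneg_left (int_W_bound h hh M hM p hp _ _) (abs_nonneg _)
      · refine (Finset.abs_sum_le_sum_abs _ _).trans ?_
        rw [Finset.mul_sum]
        apply Finset.sum_le_sum
        intro i _
        rw [abs_mul, mul_left_comm]
        exact mul_le_mul_of_nonneg_left (W_bound' h hh M hM p hp _) (abs_nonneg _)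
    have hμ' : 0 ≤ 1 / |μ| := by positivity
    calc |B (W h) / μ + W h t| ≤ |B (W h) / μ| + |W h t| := abs_add_le _ _
      _ = (1 / |μ|) * |B (W h)| + |W h t| := by rw [abs_div]; ring
      _ ≤ _ := add_le_add (mul_le_mul_of_nonneg_left b2 hμ') b1
      _ = M * Φ := by rw [hΦ]; ring
  have hΦ0 : 0 ≤ Φ := by
    have := key (fun _ => 0) 1 continuous_const (by simp) 0 m0
    exact (abs_nonneg _).trans (by simpa using this)
  -- superposition operator
  let N : C(Icc (0:ℝ) 1, ℝ) → ℝ → ℝ := fun u s =>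
    f (projIcc 0 1 zero_le_one s) (u (projIcc 0 1 zero_le_one s))
  have hN : ∀ u, Continuous (N u) := by
    intro u
    have hcp : Continuous fun s : ℝ => (((projIcc (0:ℝ) 1 zero_le_one s : Icc (0:ℝ) 1) : ℝ),
        u (projIcc 0 1 zero_le_one s)) :=
      (continuous_subtype_val.comp continuous_projIcc).prodMk (u.continuous.comp continuous_projIcc)
    exact hf.comp_continuous hcp (fun s => ⟨(projIcc (0:ℝ) 1 zero_le_one s).2, mem_univ _⟩)
  let T : C(Icc (0:ℝ) 1, ℝ) → C(Icc (0:ℝ) 1, ℝ) := fun u =>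
    ⟨fun t => B (W (N u)) / μ + W (N u) t,
      continuous_const.add ((W_cont _ (hN u)).comp continuous_subtype_val)⟩
  have hT : ContractingWith ⟨L * Φ, mul_nonneg hL.le hΦ0⟩ T := by
    refine ⟨by exact_mod_cast hLΦ, ?_⟩
    apply LipschitzWith.of_dist_le_mul
    intro u v
    have hnn : 0 ≤ L * Φ * dist u v := mul_nonneg (mul_nonneg hL.le hΦ0) dist_nonneg
    refine (ContinuousMap.dist_le hnn).2 ?_
    intro t
    have hb : ∀ s, |N u s - N v s| ≤ L * dist u v := by
      intro s
      refine (hLip _ (projIcc (0:ℝ) 1 zero_le_one s).2 _ _).trans ?_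
      refine mul_le_mul_of_nonneg_left ?_ hL.le
      exact ContinuousMap.dist_apply_le_dist (f := u) (g := v) _
    have k := key (fun s => N u s - N v s) _ ((hN u).sub (hN v)) hb t t.2
    have eW : W (fun s => N u s - N v s) = fun t => W (N u) t - W (N v) t := by
      ext t; exact W_sub _ _ (hN u) (hN v) t
    rw [eW, B_sub _ _ (W_cont _ (hN u)) (W_cont _ (hN v))] at k
    rw [Real.dist_eq]
    calc _ = |(B (W (N u)) - B (W (N v))) / μ + (W (N u) t - W (N v) t)| := by
          congr 1
          change (B (W (N u)) / μ + W (N u) t) - (B (W (N v)) / μ + W (N v) t) = _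
          ring
      _ ≤ _ := k
      _ = _ := by ring
  obtain ⟨w, hw⟩ : ∃ w, T w = w := ⟨_, hT.fixedPoint_isFixedPt⟩
  obtain ⟨u, hu, hu6, hueq, a1, a2, a3, a4, a5⟩ := sol_repr_conv (N w) (hN w) (B (W (N w)) / μ)
  have huw : ∀ t (ht : t ∈ Icc (0:ℝ) 1), u t = w ⟨t, ht⟩ := by
    intro t ht
    rw [hu t ht]
    exact congrArg (fun z : C(Icc (0:ℝ) 1, ℝ) => z ⟨t, ht⟩) hw
  refine ⟨u, ⟨hu6, ?_, a1, a2, a3, a4, a5, ?_⟩, ?_⟩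
  · intro t ht
    have ht' := Ioo_subset_Icc_self ht
    have := hueq t ht
    simp only [N, projIcc_of_mem zero_le_one ht'] at this
    rwa [huw t ht']
  · change u 0 = B u
    rw [B_congr u _ hu, B_const _ _ (W_cont _ (hN w)), hu 0 m0, W_at_zero _ (hN w)]
    field_simp
    ring
  · rintro v ⟨hv6, hveq, b1, b2, b3, b4, b5, hvB⟩
    change v 0 = B v at hvB
    let z : C(Icc (0:ℝ) 1, ℝ) := ⟨fun t => v t, hv6.continuousOn.domRestrict⟩
    have hvr := sol_repr v (N z) (hN z) hv6 (by
      intro t ht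
      have := hveq t ht
      simp only [N, projIcc_of_mem zero_le_one (Ioo_subset_Icc_self ht)]
      exact this) b1 b2 b3 b4 b5
    rw [B_congr v _ hvr, B_const _ _ (W_cont _ (hN z))] at hvB
    have hc : v 0 = B (W (N z)) / μ := by
      rw [eq_div_iff hμ]; linarith
    have hz : T z = z := by
      ext t
      change B (W (N z)) / μ + W (N z) t = v t
      rw [hvr t t.2, ← hc]
    have hzw : z = w := hT.fixedPoint_unique' hz hw
    intro t ht
    rw [huw t ht, ← hzw]
    rfl
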